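/- arXiv:1806.07883 — 5 statements merged into one kernel-verified Lean document; each statement's English description precedes it below -/
import Mathlib

section
/- For every integer n ≥ 2 and every real ρ > 0, A(ρ) = (2/(n-1)) S_{n,2}(ρ) + S_{n,1}(ρ) = e^{-2ρ} ((n+1) + (n-1) e^{-2ρ}) / (1 - e^{-2ρ})^{n+1}. -/
/-- `S n m ρ = Σ_{l=1}^∞ C(l+n-2, l) · l^m · e^{-2ρl}`. -/
noncomputable def S (n : ℕ) (m : ℤ) (ρ : ℝ) : ℝ :=
  ∑' l : ℕ, (Nat.choose (l + 1 + n - 2) (l + 1) : ℝ) * ((l : ℝ) + 1) ^ m *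
    Real.exp (-2 * ρ * ((l : ℝ) + 1))

/-- `A(ρ) = (2/(n-1)) S_{n,2}(ρ) + S_{n,1}(ρ)`. -/
noncomputable def A (n : ℕ) (ρ : ℝ) : ℝ :=
  2 / ((n : ℝ) - 1) * S n 2 ρ + S n 1 ρ

theorem stmt_4 (n : ℕ) (hn : 2 ≤ n) (ρ : ℝ) (hρ : 0 < ρ) :
    A n ρ = Real.exp (-2 * ρ) * (((n : ℝ) + 1) + ((n : ℝ) - 1) * Real.exp (-2 * ρ)) /
      (1 - Real.exp (-2 * ρ)) ^ (n + 1) := by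
  obtain ⟨k, rfl⟩ : ∃ k, n = k + 2 := ⟨n - 2, by omega⟩
  have hx0 : 0 < Real.exp (-2 * ρ) := Real.exp_pos _
  have hx1 : Real.exp (-2 * ρ) < 1 := by
    rw [Real.exp_lt_one_iff]
    linarith
  have hexp : ∀ l : ℕ, Real.exp (-2 * ρ * ((l : ℝ) + 1)) = Real.exp (-2 * ρ) ^ (l + 1) := by
    intro l
    rw [← Real.exp_nat_mul]
    congr 1
    push_cast
    ring
  set x := Real.exp (-2 * ρ) with hx
  have hn1 : ‖x‖ < 1 := by
    rw [Real.norm_eq_abs, abs_of_pos hx0]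
    exact hx1
  have h1 := hasSum_choose_mul_geometric_of_norm_lt_one (k + 1) hn1
  have h2 := hasSum_choose_mul_geometric_of_norm_lt_one (k + 2) hn1
  have c1 : ∀ l : ℕ, (Nat.choose (l + 1 + (k + 2) - 2) (l + 1) : ℝ) * ((l : ℝ) + 1) =
      ((k : ℝ) + 1) * (Nat.choose (l + (k + 1)) (k + 1) : ℝ) := by
    intro l
    have e := Nat.choose_succ_right_eq (l + (k + 1)) l
    have e2 : l + 1 + (k + 2) - 2 = l + (k + 1) := by omega
    have e3 : l + (k + 1) - l = k + 1 := by omega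
    rw [e3, Nat.choose_symm_add] at e
    rw [e2]
    have e' : ((Nat.choose (l + (k + 1)) (l + 1) * (l + 1) : ℕ) : ℝ) =
      ((Nat.choose (l + (k + 1)) (k + 1) * (k + 1) : ℕ) : ℝ) := by rw [e]
    push_cast at e'
    linarith
  have c2 : ∀ l : ℕ, ((l : ℝ) + 1) * (Nat.choose (l + (k + 1)) (k + 1) : ℝ) =
      ((k : ℝ) + 2) * (Nat.choose (l + (k + 2)) (k + 2) : ℝ) -
        ((k : ℝ) + 1) * (Nat.choose (l + (k + 1)) (k + 1) : ℝ) := by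
    intro l
    have e := Nat.add_one_mul_choose_eq (l + (k + 1)) (k + 1)
    have e' : (((l + (k + 1) + 1) * Nat.choose (l + (k + 1)) (k + 1) : ℕ) : ℝ) =
      ((Nat.choose (l + (k + 2)) (k + 2) * (k + 2) : ℕ) : ℝ) := by
      exact_mod_cast e
    push_cast at e'
    linarith
  have hS1 : S (k + 2) 1 ρ = ((k : ℝ) + 1) * x * (1 / (1 - x) ^ (k + 1 + 1)) := by
    unfold S
    rw [← (h1.mul_left (((k : ℝ) + 1) * x)).tsum_eq]
    congr 1
    funext l
    rw [hexp, zpow_one, c1, pow_succ]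
    ring
  have hS2 : S (k + 2) 2 ρ = ((k : ℝ) + 1) * x * (((k : ℝ) + 2) * (1 / (1 - x) ^ (k + 2 + 1)) -
      ((k : ℝ) + 1) * (1 / (1 - x) ^ (k + 1 + 1))) := by
    unfold S
    rw [← (((h2.mul_left ((k : ℝ) + 2)).sub (h1.mul_left ((k : ℝ) + 1))).mul_left
      (((k : ℝ) + 1) * x)).tsum_eq]
    congr 1
    funext l
    have z : ((l : ℝ) + 1) ^ (2 : ℤ) = ((l : ℝ) + 1) * ((l : ℝ) + 1) := by
      rw [zpow_ofNat, sq]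
    rw [hexp, z, ← mul_assoc, c1, pow_succ]
    linear_combination ((k : ℝ) + 1) * x * x ^ l * c2 l
  have hne : 1 - x ≠ 0 := by linarith
  have hk : (k : ℝ) + 1 ≠ 0 := by positivity
  have hk2 : ((k + 2 : ℕ) : ℝ) - 1 = (k : ℝ) + 1 := by
    push_cast
    ring
  unfold A
  rw [hS1, hS2, hk2]
  push_cast
  have p1 : (1 - x) ^ (k + 2 + 1) = (1 - x) ^ (k + 1 + 1) * (1 - x) := pow_succ _ _
  rw [p1]
  have hp : (1 - x) ^ (k + 1 + 1) ≠ 0 := pow_ne_zero _ hne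
  generalize (1 - x) ^ (k + 1 + 1) = P at hp ⊢
  field_simp
  ring
end

section
/- For every integer n ≥ 2 and every real ρ > 0, C(ρ) = (2/(n-1)) S_{n,4}(ρ) + 3 S_{n,3}(ρ) + (n-1) S_{n,2}(ρ) = n(n+1) e^{-2ρ} (1 + (n+3) e^{-2ρ} + n e^{-4ρ}) / (1 - e^{-2ρ})^{n+3}. -/
/-- `C(ρ) = (2/(n-1)) S_{n,4}(ρ) + 3 S_{n,3}(ρ) + (n-1) S_{n,2}(ρ)`. -/
noncomputable def Cf (n : ℕ) (ρ : ℝ) : ℝ :=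
  2 / ((n : ℝ) - 1) * S n 4 ρ + 3 * S n 3 ρ + ((n : ℝ) - 1) * S n 2 ρ

/-- Pointwise identity for the summand. -/
lemma term_identity (k j : ℕ) :
    2 / ((k : ℝ) + 1) * ((Nat.choose (j + 1 + k) (j + 1) : ℝ) * ((j : ℝ) + 1) ^ 4)
      + 3 * ((Nat.choose (j + 1 + k) (j + 1) : ℝ) * ((j : ℝ) + 1) ^ 3)
      + ((k : ℝ) + 1) * ((Nat.choose (j + 1 + k) (j + 1) : ℝ) * ((j : ℝ) + 1) ^ 2)
    = ((k : ℝ) + 2) * (((k : ℝ) + 2) * (k + 3) * (Nat.choose (j + (k + 2)) (k + 2) : ℝ)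
      - 3 * ((k : ℝ) + 3) ^ 2 * (Nat.choose (j + (k + 3)) (k + 3) : ℝ)
      + 2 * ((k : ℝ) + 3) * (k + 4) * (Nat.choose (j + (k + 4)) (k + 4) : ℝ)) := by
  have e0 : Nat.choose (j + 1 + k) (j + 1) = Nat.choose (j + 1 + k) k :=
    Nat.choose_symm_add
  have h1 := Nat.add_one_mul_choose_eq (j + 1 + k) k
  have h2 := Nat.choose_succ_right_eq (j + 1 + k + 1) (k + 1)
  have h3 := Nat.add_one_mul_choose_eq (j + (k + 2)) (k + 2)
  have h4 := Nat.add_one_mul_choose_eq (j + (k + 3)) (k + 3)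
  rw [show j + 1 + k + 1 - (k + 1) = j + 1 by omega] at h2
  rw [show j + 1 + k + 1 = j + (k + 2) by ring] at h1 h2
  rw [e0]
  simp only [← add_assoc] at *
  have g1 := congrArg (Nat.cast (R := ℝ)) h1
  have g2 := congrArg (Nat.cast (R := ℝ)) h2
  have g3 := congrArg (Nat.cast (R := ℝ)) h3
  have g4 := congrArg (Nat.cast (R := ℝ)) h4
  simp only [add_assoc] at g1 g2 g3 g4 ⊢
  norm_num only at g1 g2 g3 g4 ⊢
  push_cast at g1 g2 g3 g4
  generalize ((Nat.choose (j + (1 + k)) k : ℕ) : ℝ) = A at *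
  generalize ((Nat.choose (j + (k + 2)) (k + 1) : ℕ) : ℝ) = B at *
  generalize ((Nat.choose (j + (k + 2)) (k + 2) : ℕ) : ℝ) = D at *
  generalize ((Nat.choose (j + (k + 3)) (k + 3) : ℕ) : ℝ) = E at *
  generalize ((Nat.choose (j + (k + 4)) (k + 4) : ℕ) : ℝ) = F at *
  have hk1 : (k : ℝ) + 1 ≠ 0 := by positivity
  have hk3 : (k : ℝ) + 3 ≠ 0 := by positivity
  have hk4 : (k : ℝ) + 4 ≠ 0 := by positivity
  have hj : (j : ℝ) + (k + 2) ≠ 0 := by positivity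
  have hF : F = (j + (k + 3) + 1) * E / (k + 4) := by
    field_simp; linarith
  have hE : E = (j + (k + 2) + 1) * D / (k + 3) := by
    field_simp; linarith
  have hB : B = D * (k + 2) / (j + 1) := by
    field_simp; linarith
  have hA : A = B * (k + 1) / (j + (k + 2)) := by
    field_simp; linarith
  rw [hF, hE, hA, hB]
  field_simp
  ring

theorem stmt_5 (n : ℕ) (hn : 2 ≤ n) (ρ : ℝ) (hρ : 0 < ρ) :
    Cf n ρ = (n : ℝ) * ((n : ℝ) + 1) * Real.exp (-2 * ρ) *
      (1 + ((n : ℝ) + 3) * Real.exp (-2 * ρ) + (n : ℝ) * Real.exp (-4 * ρ)) /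
      (1 - Real.exp (-2 * ρ)) ^ (n + 3) := by
  obtain ⟨k, rfl⟩ : ∃ k, n = k + 2 := ⟨n - 2, by omega⟩
  have hx4 : Real.exp (-4 * ρ) = Real.exp (-2 * ρ) ^ 2 := by
    rw [← Real.exp_nat_mul]; congr 1; push_cast; ring
  have hxl : ∀ l : ℕ, Real.exp (-2 * ρ * ((l : ℝ) + 1)) = Real.exp (-2 * ρ) ^ (l + 1) := by
    intro l
    rw [← Real.exp_nat_mul]; congr 1; push_cast; ring
  have hx1 : Real.exp (-2 * ρ) < 1 := by
    rw [Real.exp_lt_one_iff]; linarith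
  have hx0 := Real.exp_pos (-2 * ρ)
  unfold Cf S
  simp only [hxl, hx4]
  generalize Real.exp (-2 * ρ) = x at *
  have hnx : ‖x‖ < 1 := by rw [Real.norm_eq_abs, abs_of_pos hx0]; exact hx1
  have s2 := hasSum_choose_mul_geometric_of_norm_lt_one (k + 2) hnx
  have s3 := hasSum_choose_mul_geometric_of_norm_lt_one (k + 3) hnx
  have s4 := hasSum_choose_mul_geometric_of_norm_lt_one (k + 4) hnx
  have st := ((((s2.mul_left (((k : ℝ) + 2) * (k + 3))).sub
    (s3.mul_left (3 * ((k : ℝ) + 3) ^ 2))).add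
    (s4.mul_left (2 * ((k : ℝ) + 3) * (k + 4)))).mul_left (((k : ℝ) + 2) * x))
  set t : ℤ → ℕ → ℝ := fun m l =>
    (Nat.choose (l + 1 + (k + 2) - 2) (l + 1) : ℝ) * ((l : ℝ) + 1) ^ m * x ^ (l + 1) with ht
  have ht0 : ∀ m l, 0 ≤ t m l := by intro m l; simp only [ht]; positivity
  have hsum : HasSum (fun l => 2 / ((k : ℝ) + 1) * t 4 l + 3 * t 3 l + ((k : ℝ) + 1) * t 2 l)
      (((k : ℝ) + 2) * x * (((k : ℝ) + 2) * (k + 3) * (1 / (1 - x) ^ (k + 2 + 1))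
        - 3 * ((k : ℝ) + 3) ^ 2 * (1 / (1 - x) ^ (k + 3 + 1))
        + 2 * ((k : ℝ) + 3) * (k + 4) * (1 / (1 - x) ^ (k + 4 + 1)))) := by
    convert! st using 1
    funext l
    have := term_identity k l
    simp only [ht]
    rw [show l + 1 + (k + 2) - 2 = l + 1 + k by omega]
    have z4 : ((l : ℝ) + 1) ^ (4 : ℤ) = ((l : ℝ) + 1) ^ 4 := by norm_cast
    have z3 : ((l : ℝ) + 1) ^ (3 : ℤ) = ((l : ℝ) + 1) ^ 3 := by norm_cast
    have z2 : ((l : ℝ) + 1) ^ (2 : ℤ) = ((l : ℝ) + 1) ^ 2 := by norm_cast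
    rw [z4, z3, z2]
    linear_combination x ^ (l + 1) * this
  have hk : 0 < (k : ℝ) + 1 := by positivity
  have c4 : Summable (fun l => 2 / ((k : ℝ) + 1) * t 4 l) :=
    Summable.of_nonneg_of_le (fun l => mul_nonneg (by positivity) (ht0 4 l))
      (fun l => by
        have := mul_nonneg hk.le (ht0 2 l)
        linarith [ht0 3 l]) hsum.summable
  have c3 : Summable (fun l => 3 * t 3 l) :=
    Summable.of_nonneg_of_le (fun l => mul_nonneg (by positivity) (ht0 3 l))
      (fun l => by
        have := mul_nonneg hk.le (ht0 2 l)
        have := mul_nonneg (show 0 ≤ 2 / ((k : ℝ) + 1) by positivity) (ht0 4 l)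
        linarith) hsum.summable
  have c2 : Summable (fun l => ((k : ℝ) + 1) * t 2 l) :=
    Summable.of_nonneg_of_le (fun l => mul_nonneg hk.le (ht0 2 l))
      (fun l => by
        have := mul_nonneg (show 0 ≤ 2 / ((k : ℝ) + 1) by positivity) (ht0 4 l)
        linarith [ht0 3 l]) hsum.summable
  have key := hsum.tsum_eq
  rw [(c4.add c3).tsum_add c2, c4.tsum_add c3, tsum_mul_left, tsum_mul_left, tsum_mul_left] at key
  have hk' : ((k + 2 : ℕ) : ℝ) - 1 = (k : ℝ) + 1 := by push_cast; ring
  rw [hk']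
  refine key.trans ?_
  have hne : 1 - x ≠ 0 := by linarith
  push_cast
  field_simp
  ring
end

section
/- For every integer n ≥ 2 and every real ρ > 0, the variance in the momentum domain of the Abel-Poisson wavelet satisfies C(ρ)/A(ρ) = n(n+1) (n + (n+3) e^{2ρ} + e^{4ρ}) e^{2ρ} / ((n-1 + (n+1) e^{2ρ}) (e^{2ρ} - 1)²). -/
/-- Rising identity `(j+k+1) C(j+k,k) = (k+1) C(j+k+1,k+1)` over the reals. -/
lemma choose_step (j k : ℕ) :
    ((j : ℝ) + k + 1) * ((j + k).choose k : ℝ) = ((k : ℝ) + 1) * ((j + (k + 1)).choose (k + 1) : ℝ) := by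
  have h := Nat.add_one_mul_choose_eq (j + k) k
  have h2 : (((j + k + 1) * (j + k).choose k : ℕ) : ℝ) = (((j + k + 1).choose (k + 1) * (k + 1) : ℕ) : ℝ) := by
    exact_mod_cast h
  push_cast at h2
  rw [← add_assoc]
  linarith

lemma hasSum_F (k : ℕ) (r : ℝ) (h0 : 0 < r) (h1 : r < 1) :
    HasSum (fun j : ℕ => ((j + k).choose k : ℝ) * r ^ j) (1 / (1 - r) ^ (k + 1)) :=
  hasSum_choose_mul_geometric_of_norm_lt_one k (by rw [Real.norm_eq_abs, abs_of_pos h0]; exact h1)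

/-- Term of `S` in terms of `C(j+k,k)`, where `n = k+1`. -/
lemma term_eq (k j m : ℕ) (ρ : ℝ) :
    (Nat.choose (j + 1 + (k + 1) - 2) (j + 1) : ℝ) * ((j : ℝ) + 1) ^ ((m + 1 : ℕ) : ℤ) *
      Real.exp (-2 * ρ * ((j : ℝ) + 1)) =
    k * Real.exp (-2 * ρ) * (((j : ℝ) + 1) ^ m * (((j + k).choose k : ℝ) * Real.exp (-2 * ρ) ^ j)) := by
  have e : Real.exp (-2 * ρ * ((j : ℝ) + 1)) = Real.exp (-2 * ρ) ^ j * Real.exp (-2 * ρ) := by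
    rw [← pow_succ, ← Real.exp_nat_mul]
    congr 1
    push_cast
    ring
  have c : (Nat.choose (j + k) (j + 1) : ℝ) * ((j : ℝ) + 1) = ((j + k).choose k : ℝ) * k := by
    have h := Nat.choose_succ_right_eq (j + k) j
    rw [Nat.add_sub_cancel_left, Nat.choose_symm_add] at h
    exact_mod_cast h
  have i : j + 1 + (k + 1) - 2 = j + k := by omega
  rw [i, e, zpow_natCast, pow_succ]
  linear_combination (((j : ℝ) + 1) ^ m * Real.exp (-2 * ρ) ^ j * Real.exp (-2 * ρ)) * c

lemma hcongr {f g : ℕ → ℝ} {a : ℝ} (h : HasSum f a) (e : ∀ j, g j = f j) : HasSum g a := by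
  rwa [funext e]

lemma S_eq (k m : ℕ) (ρ T : ℝ)
    (h : HasSum (fun j : ℕ => ((j : ℝ) + 1) ^ m * (((j + k).choose k : ℝ) * Real.exp (-2 * ρ) ^ j)) T) :
    S (k + 1) ((m + 1 : ℕ) : ℤ) ρ = k * Real.exp (-2 * ρ) * T := by
  rw [S, ← (h.mul_left (k * Real.exp (-2 * ρ))).tsum_eq]
  exact tsum_congr fun j => term_eq k j m ρ

/-- The variance in the momentum domain of the Abel-Poisson wavelet. -/
theorem stmt_6 (n : ℕ) (hn : 2 ≤ n) (ρ : ℝ) (hρ : 0 < ρ) :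
    Cf n ρ / A n ρ =
      (n : ℝ) * ((n : ℝ) + 1) *
        ((n : ℝ) + ((n : ℝ) + 3) * Real.exp (2 * ρ) + Real.exp (4 * ρ)) * Real.exp (2 * ρ) /
      ((((n : ℝ) - 1) + ((n : ℝ) + 1) * Real.exp (2 * ρ)) * (Real.exp (2 * ρ) - 1) ^ 2) := by
  obtain ⟨k, rfl⟩ : ∃ k, n = k + 1 := ⟨n - 1, by omega⟩
  have hk : (0 : ℝ) < k := by
    have : 0 < k := by omega
    exact_mod_cast this
  have h0 : 0 < Real.exp (-2 * ρ) := Real.exp_pos _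
  have h1 : Real.exp (-2 * ρ) < 1 := by
    rw [Real.exp_lt_one_iff]
    linarith
  have F0 := hasSum_F k _ h0 h1
  have F1 := hasSum_F (k + 1) _ h0 h1
  have F2 := hasSum_F (k + 1 + 1) _ h0 h1
  have F3 := hasSum_F (k + 1 + 1 + 1) _ h0 h1
  have s0 := fun j => choose_step j k
  have s1 := fun j => choose_step j (k + 1)
  have s2 := fun j => choose_step j (k + 1 + 1)
  push_cast at s1 s2
  have E1 : S (k + 1) 1 ρ = _ := S_eq k 0 ρ _ (hcongr F0 fun j => by rw [pow_zero, one_mul])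
  have E2 : S (k + 1) 2 ρ = _ := S_eq k 1 ρ _ (hcongr ((F1.mul_left ((k : ℝ) + 1)).sub (F0.mul_left (k : ℝ))) fun j => by
    linear_combination (Real.exp (-2 * ρ) ^ j) * s0 j)
  have E3 : S (k + 1) 3 ρ = _ := S_eq k 2 ρ _ (hcongr (((F2.mul_left (((k : ℝ) + 1) * (k + 2))).sub
    (F1.mul_left (((k : ℝ) + 1) * (2 * k + 1)))).add (F0.mul_left ((k : ℝ) ^ 2))) fun j => by
    linear_combination (Real.exp (-2 * ρ) ^ j) * (((j : ℝ) + 1 - k) * s0 j + ((k : ℝ) + 1) * s1 j))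
  have E4 : S (k + 1) 4 ρ = _ := S_eq k 3 ρ _ (hcongr ((((F3.mul_left (((k : ℝ) + 1) * (k + 2) * (k + 3))).sub
    (F2.mul_left (((k : ℝ) + 1) * (k + 2) * (3 * k + 3)))).add
    (F1.mul_left (((k : ℝ) + 1) * ((2 * k + 1) * (k + 1) + k ^ 2)))).sub
    (F0.mul_left ((k : ℝ) ^ 3))) fun j => by
    linear_combination (Real.exp (-2 * ρ) ^ j) * ((((j : ℝ) + 1) ^ 2 - k * ((j : ℝ) + 1) + k ^ 2) * s0 j
      + ((k : ℝ) + 1) * ((j : ℝ) + 1 - (2 * k + 1)) * s1 j + ((k : ℝ) + 1) * (k + 2) * s2 j))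
  have e4 : Real.exp (4 * ρ) = Real.exp (2 * ρ) ^ 2 := by
    rw [← Real.exp_nat_mul]
    congr 1
    push_cast
    ring
  have e2 : Real.exp (2 * ρ) = (Real.exp (-2 * ρ))⁻¹ := by
    rw [← Real.exp_neg]
    congr 1
    ring
  rw [Cf, A, E1, E2, E3, E4, e4, e2]
  push_cast
  generalize Real.exp (-2 * ρ) = r at h0 h1
  have hu : 0 < 1 - r := by linarith
  have hr : r ≠ 0 := h0.ne'
  have hG : 0 < (1 - r) ^ k := pow_pos hu k
  have p1 : (1 - r) ^ (k + 1) = (1 - r) ^ k * (1 - r) := by ring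
  have p2 : (1 - r) ^ (k + 1 + 1) = (1 - r) ^ k * (1 - r) ^ 2 := by ring
  have p3 : (1 - r) ^ (k + 1 + 1 + 1) = (1 - r) ^ k * (1 - r) ^ 3 := by ring
  have p4 : (1 - r) ^ (k + 1 + 1 + 1 + 1) = (1 - r) ^ k * (1 - r) ^ 4 := by ring
  rw [p1, p2, p3, p4]
  generalize (1 - r) ^ k = G at hG
  generalize (k : ℝ) = x at hk
  have hu' : 1 - r ≠ 0 := hu.ne'
  have hd : x + 2 + x * r ≠ 0 := by positivity
  have hx : x + 1 - 1 = x := by ring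
  rw [hx]
  have hA : 2 / x * (x * r * ((x + 1) * (1 / (G * (1 - r) ^ 2)) - x * (1 / (G * (1 - r)))))
      + x * r * (1 / (G * (1 - r))) = r * (x + 2 + x * r) / (G * (1 - r) ^ 2) := by
    field_simp
    ring
  have hR : (x + 1) * (x + 1 + 1) * (x + 1 + (x + 1 + 3) * r⁻¹ + r⁻¹ ^ 2) * r⁻¹ /
      ((x + (x + 1 + 1) * r⁻¹) * (r⁻¹ - 1) ^ 2) =
      (x + 1) * (x + 2) * ((x + 1) * r ^ 2 + (x + 4) * r + 1) / ((x + 2 + x * r) * (1 - r) ^ 2) := by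
    have a : x + (x + 1 + 1) * r⁻¹ = (x + 2 + x * r) * r⁻¹ := by
      field_simp
      ring
    have b : r⁻¹ - 1 = (1 - r) * r⁻¹ := by
      field_simp
    rw [a, b]
    field_simp
    ring
  rw [hA, hR]
  rw [div_eq_div_iff (by positivity) (by positivity)]
  field_simp
  ring
end

section
/- For every integer n ≥ 2 and every real ρ > 0, with λ = (n-1)/2, the series B(ρ) = Σ_{l=1}^∞ (2(l+n-1)/(n-1)) C(l+n-2, l) √(l(l+1)) e^{-2ρl} converges, and |B(ρ) - [(1/λ) S_{n,2}(ρ) + (1/(2λ) + 2) S_{n,1}(ρ) + (1 - 1/(8λ)) S_{n,0}(ρ)]| ≤ (1/4) S_{n,-1}(ρ), where S_{n,-1}(ρ) = Σ_{l=1}^∞ C(l+n-2, l) e^{-2ρl} / l. -/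
/-- The term of the series `B(ρ) = Σ_{l=1}^∞ (2(l+n-1)/(n-1)) C(l+n-2,l) √(l(l+1)) e^{-2ρl}`
(the index below is shifted so that `l : ℕ` corresponds to the summation index `l+1`). -/
noncomputable def Bterm (n : ℕ) (ρ : ℝ) (l : ℕ) : ℝ :=
  2 * (((l : ℝ) + 1) + (n : ℝ) - 1) / ((n : ℝ) - 1) * (Nat.choose (l + 1 + n - 2) (l + 1) : ℝ) *
    Real.sqrt (((l : ℝ) + 1) * ((l : ℝ) + 2)) * Real.exp (-2 * ρ * ((l : ℝ) + 1))

theorem S_summable (n : ℕ) (hn : 2 ≤ n) (m : ℤ) (hm : m ≤ 2) (ρ : ℝ) (hρ : 0 < ρ) :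
    Summable (fun l : ℕ => (Nat.choose (l + 1 + n - 2) (l + 1) : ℝ) * ((l : ℝ) + 1) ^ m *
    Real.exp (-2 * ρ * ((l : ℝ) + 1))) := by
  obtain ⟨k, rfl⟩ : ∃ k, n = k + 2 := ⟨n - 2, by omega⟩
  have hr : ‖Real.exp (-2 * ρ)‖ < 1 := by
    rw [Real.norm_eq_abs, abs_of_pos (Real.exp_pos _), Real.exp_lt_one_iff]
    linarith
  have h0 := summable_pow_mul_geometric_of_norm_lt_one (k + 2) hr
  have h1 := ((summable_nat_add_iff 1).2 h0).mul_left (((k : ℝ) + 1) ^ k)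
  refine Summable.of_nonneg_of_le (fun l => by positivity) (fun l => ?_) h1
  have e1 : Real.exp (-2 * ρ * ((l : ℝ) + 1)) = Real.exp (-2 * ρ) ^ (l + 1) := by
    rw [← Real.exp_nat_mul]
    congr 1
    push_cast
    ring
  have e2 : (Nat.choose (l + 1 + (k + 2) - 2) (l + 1) : ℝ) ≤ ((k : ℝ) + 1) ^ k * ((l : ℝ) + 1) ^ k := by
    have a : l + 1 + (k + 2) - 2 = l + 1 + k := by omega
    rw [a, Nat.choose_symm_add, ← mul_pow]
    have b : (l + 1 + k).choose k ≤ ((k + 1) * (l + 1)) ^ k :=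
      (Nat.choose_le_pow _ _).trans (Nat.pow_le_pow_left (by nlinarith [Nat.zero_le (k * l)]) k)
    exact_mod_cast b
  have e3 : ((l : ℝ) + 1) ^ m ≤ ((l : ℝ) + 1) ^ 2 := by
    have : (1 : ℝ) ≤ (l : ℝ) + 1 := by
      have := Nat.cast_nonneg (α := ℝ) l
      linarith
    exact_mod_cast zpow_le_zpow_right₀ this hm
  rw [e1]
  calc _ ≤ (((k : ℝ) + 1) ^ k * ((l : ℝ) + 1) ^ k) * ((l : ℝ) + 1) ^ 2 * Real.exp (-2 * ρ) ^ (l + 1) := by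
        gcongr
    _ = _ := by
        push_cast
        ring

theorem sqrt_bounds (x : ℝ) (hx : 1 ≤ x) :
    x + 1 / 2 - 1 / (8 * x) ≤ Real.sqrt (x * (x + 1)) ∧
    Real.sqrt (x * (x + 1)) ≤ x + 1 / 2 - 1 / (8 * x) + 1 / (16 * x ^ 2) := by
  have hx0 : 0 < x := by linarith
  obtain ⟨y, hy⟩ : ∃ y, y = 1 / x := ⟨_, rfl⟩
  have hxy : x * y = 1 := by rw [hy]; field_simp
  have hy0 : 0 < y := by rw [hy]; positivity
  have hy1 : y ≤ 1 := by nlinarith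
  have a1 : 1 / (8 * x) = y / 8 := by rw [hy]; field_simp
  have a2 : 1 / (16 * x ^ 2) = y ^ 2 / 16 := by rw [hy]; field_simp
  rw [a1, a2]
  constructor
  · apply Real.le_sqrt_of_sq_le
    have : (x + 1 / 2 - y / 8) ^ 2 = x ^ 2 + x + 1 / 4 - (x * y) / 4 - y / 8 + y ^ 2 / 64 := by ring
    rw [this, hxy]
    nlinarith
  · apply Real.sqrt_le_iff.2
    constructor
    · nlinarith
    · have : (x + 1 / 2 - y / 8 + y ^ 2 / 16) ^ 2 = x ^ 2 + x + 1 / 4 - (x * y) / 4 - y / 8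
          + y ^ 2 / 64 + (x * y) * y / 8 + y ^ 2 / 16 - y ^ 3 / 64 + y ^ 4 / 256 := by ring
      rw [this, hxy]
      have : y ^ 3 ≤ y ^ 2 := pow_le_pow_of_le_one hy0.le hy1 (by norm_num)
      have : 0 < y ^ 4 := by positivity
      have : 0 < y ^ 2 := by positivity
      nlinarith

theorem key_bound (x lam : ℝ) (hx : 1 ≤ x) (hl : 1 / 2 ≤ lam) :
    |(x / lam + 2) * Real.sqrt (x * (x + 1)) -
      ((1 / lam) * x ^ 2 + (1 / (2 * lam) + 2) * x + (1 - 1 / (8 * lam)))| ≤ 1 / 4 * x⁻¹ := by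
  obtain ⟨h1, h2⟩ := sqrt_bounds x hx
  have hx0 : 0 < x := by linarith
  have hl0 : 0 < lam := by linarith
  obtain ⟨e, he⟩ : ∃ e, e = Real.sqrt (x * (x + 1)) - (x + 1 / 2 - 1 / (8 * x)) := ⟨_, rfl⟩
  have hs : Real.sqrt (x * (x + 1)) = x + 1 / 2 - 1 / (8 * x) + e := by rw [he]; ring
  have he0 : 0 ≤ e := by linarith
  have he1 : e ≤ 1 / (16 * x ^ 2) := by linarith
  have id : (x / lam + 2) * Real.sqrt (x * (x + 1)) -
      ((1 / lam) * x ^ 2 + (1 / (2 * lam) + 2) * x + (1 - 1 / (8 * lam)))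
      = (x / lam + 2) * e - 1 / 4 * x⁻¹ := by
    rw [hs]
    field_simp
    ring
  have p : 0 ≤ (x / lam + 2) * e := by positivity
  have q0 : x / lam + 2 ≤ 4 * x := by
    have : x / lam ≤ 2 * x := by
      rw [div_le_iff₀ hl0]
      nlinarith
    linarith
  have q : (x / lam + 2) * e ≤ 1 / 4 * x⁻¹ := by
    calc _ ≤ 4 * x * (1 / (16 * x ^ 2)) := by gcongr
      _ = _ := by
        field_simp
        norm_num
  rw [id, abs_le]
  have : 0 < x⁻¹ := by positivity
  constructor <;> linarith

theorem stmt_8 (n : ℕ) (hn : 2 ≤ n) (ρ : ℝ) (hρ : 0 < ρ) (lam : ℝ) (hlam : lam = ((n : ℝ) - 1) / 2) :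
    Summable (Bterm n ρ) ∧
    |(∑' l : ℕ, Bterm n ρ l) -
        ((1 / lam) * S n 2 ρ + (1 / (2 * lam) + 2) * S n 1 ρ + (1 - 1 / (8 * lam)) * S n 0 ρ)| ≤
      (1 / 4) * S n (-1) ρ := by
  have hn' : (2 : ℝ) ≤ n := by exact_mod_cast hn
  have hl : 1 / 2 ≤ lam := by rw [hlam]; linarith
  have hl0 : 0 < lam := by linarith
  have s2 := (S_summable n hn 2 (by norm_num) ρ hρ).hasSum.mul_left (1 / lam)
  have s1 := (S_summable n hn 1 (by norm_num) ρ hρ).hasSum.mul_left (1 / (2 * lam) + 2)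
  have s0 := (S_summable n hn 0 (by norm_num) ρ hρ).hasSum.mul_left (1 - 1 / (8 * lam))
  have sm := (S_summable n hn (-1) (by norm_num) ρ hρ).hasSum.mul_left (1 / 4)
  have sT := (s2.add s1).add s0
  obtain ⟨T, hT⟩ : ∃ T : ℕ → ℝ, T = fun l : ℕ =>
      (1 / lam) * ((Nat.choose (l + 1 + n - 2) (l + 1) : ℝ) * ((l : ℝ) + 1) ^ (2 : ℤ) *
      Real.exp (-2 * ρ * ((l : ℝ) + 1))) +
      (1 / (2 * lam) + 2) * ((Nat.choose (l + 1 + n - 2) (l + 1) : ℝ) * ((l : ℝ) + 1) ^ (1 : ℤ) *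
      Real.exp (-2 * ρ * ((l : ℝ) + 1))) +
      (1 - 1 / (8 * lam)) * ((Nat.choose (l + 1 + n - 2) (l + 1) : ℝ) * ((l : ℝ) + 1) ^ (0 : ℤ) *
      Real.exp (-2 * ρ * ((l : ℝ) + 1))) := ⟨_, rfl⟩
  rw [← hT] at sT
  have hb : ∀ l, ‖Bterm n ρ l - T l‖ ≤ 1 / 4 * ((Nat.choose (l + 1 + n - 2) (l + 1) : ℝ) *
      ((l : ℝ) + 1) ^ (-1 : ℤ) * Real.exp (-2 * ρ * ((l : ℝ) + 1))) := by
    intro l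
    have hx : (1 : ℝ) ≤ (l : ℝ) + 1 := by
      have := Nat.cast_nonneg (α := ℝ) l
      linarith
    have k := key_bound ((l : ℝ) + 1) lam hx hl
    have c : 2 * (((l : ℝ) + 1) + (n : ℝ) - 1) / ((n : ℝ) - 1) = ((l : ℝ) + 1) / lam + 2 := by
      have : (n : ℝ) = 2 * lam + 1 := by rw [hlam]; ring
      rw [this]
      field_simp
      ring
    have c2 : (l : ℝ) + 2 = (l : ℝ) + 1 + 1 := by ring
    have hw : 0 ≤ (Nat.choose (l + 1 + n - 2) (l + 1) : ℝ) * Real.exp (-2 * ρ * ((l : ℝ) + 1)) := by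
      positivity
    have z2 : ((l : ℝ) + 1) ^ (2 : ℤ) = ((l : ℝ) + 1) ^ 2 := by norm_cast
    have eq : Bterm n ρ l - T l = ((Nat.choose (l + 1 + n - 2) (l + 1) : ℝ) *
        Real.exp (-2 * ρ * ((l : ℝ) + 1))) * ((((l : ℝ) + 1) / lam + 2) *
        Real.sqrt (((l : ℝ) + 1) * ((l : ℝ) + 1 + 1)) -
      ((1 / lam) * ((l : ℝ) + 1) ^ 2 + (1 / (2 * lam) + 2) * ((l : ℝ) + 1) +
        (1 - 1 / (8 * lam)))) := by
      rw [hT]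
      simp only [Bterm]
      rw [c, c2, z2, zpow_one, zpow_zero]
      ring
    rw [eq, Real.norm_eq_abs, abs_mul, abs_of_nonneg hw, zpow_neg_one]
    refine (mul_le_mul_of_nonneg_left k hw).trans (le_of_eq ?_)
    ring
  have sd : Summable (fun l => Bterm n ρ l - T l) := Summable.of_norm_bounded sm.summable hb
  have sB : Summable (Bterm n ρ) := by
    have := sd.add sT.summable
    simpa using this
  refine ⟨sB, ?_⟩
  have hd := (sB.hasSum.sub sT).tsum_eq
  have := tsum_of_norm_bounded sm hb
  rw [hd] at this
  exact this
end

section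
/- For every integer n ≥ 2, the uncertainty product of the Abel-Poisson wavelet satisfies lim_{ρ→0+} √(e^{2ρ} A(ρ)²/B(ρ)² - 1) · √(C(ρ)/A(ρ)) = (1/2) √((n+1)(n+2)(n² - 3n + 3) / (n(n-1))). -/
open Filter

/-- `B(ρ) = Σ_{l=1}^∞ (2(l+n-1)/(n-1)) C(l+n-2,l) √(l(l+1)) e^{-2ρl}`. -/
noncomputable def B (n : ℕ) (ρ : ℝ) : ℝ :=
  ∑' l : ℕ, 2 * (((l : ℝ) + 1) + (n : ℝ) - 1) / ((n : ℝ) - 1) *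
    (Nat.choose (l + 1 + n - 2) (l + 1) : ℝ) *
    Real.sqrt (((l : ℝ) + 1) * ((l : ℝ) + 2)) * Real.exp (-2 * ρ * ((l : ℝ) + 1))

open Topology

lemma w_hasSum (m : ℕ) {x : ℝ} (hx : 0 < x) (hx1 : x < 1) :
    HasSum (fun l : ℕ => ((l + m).choose m : ℝ) * (1 - x) ^ l) (1 / x ^ (m + 1)) := by
  have h := hasSum_choose_mul_geometric_of_norm_lt_one (𝕜 := ℝ) m (r := 1 - x)
    (by rw [Real.norm_eq_abs, abs_lt]; constructor <;> linarith)
  simpa using h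

lemma w_pos (m l : ℕ) : (0 : ℝ) < ((l + m).choose m : ℝ) := by
  exact_mod_cast Nat.choose_pos (Nat.le_add_left m l)

lemma abel_summable (m : ℕ) (f : ℕ → ℝ) (L : ℝ)
    (h : Tendsto (fun l : ℕ => f l / ((l + m).choose m : ℝ)) atTop (𝓝 L))
    {x : ℝ} (hx : 0 < x) (hx1 : x < 1) :
    Summable (fun l : ℕ => f l * (1 - x) ^ l) := by
  refine summable_of_isBigO_nat (w_hasSum m hx hx1).summable ?_
  refine Asymptotics.IsBigO.mul ?_ (Asymptotics.isBigO_refl _ _)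
  refine Asymptotics.isBigO_of_div_tendsto_nhds ?_ L h
  refine Eventually.of_forall fun l h0 => ?_
  exact absurd h0 (w_pos m l).ne'

lemma abel_zero (m : ℕ) (f : ℕ → ℝ)
    (h : Tendsto (fun l : ℕ => f l / ((l + m).choose m : ℝ)) atTop (𝓝 0)) :
    Tendsto (fun x : ℝ => x ^ (m + 1) * ∑' l : ℕ, f l * (1 - x) ^ l) (𝓝[>] 0) (𝓝 0) := by
  rw [Metric.tendsto_nhds]
  intro ε hε
  have h1 : ∀ᶠ l : ℕ in atTop, |f l| ≤ ε / 2 * ((l + m).choose m : ℝ) := by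
    have := (Metric.tendsto_nhds.1 h) (ε / 2) (by positivity)
    filter_upwards [this] with l hl
    rw [Real.dist_eq, sub_zero, abs_div, abs_of_pos (w_pos m l), div_lt_iff₀ (w_pos m l)] at hl
    exact hl.le
  obtain ⟨N, hN⟩ := eventually_atTop.1 h1
  set K : ℝ := ∑ l ∈ Finset.range N, |f l| with hK
  have hlim : Tendsto (fun x : ℝ => ε / 2 + x ^ (m + 1) * K) (𝓝[>] 0) (𝓝 (ε / 2)) := by
    have : Tendsto (fun x : ℝ => ε / 2 + x ^ (m + 1) * K) (𝓝 0)
        (𝓝 (ε / 2 + 0 ^ (m + 1) * K)) := by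
      apply Continuous.tendsto
      fun_prop
    simp only [ne_eq, Nat.succ_ne_zero, not_false_eq_true, zero_pow, zero_mul, add_zero] at this
    exact this.mono_left nhdsWithin_le_nhds
  have hIoo : ∀ᶠ x : ℝ in 𝓝[>] 0, x ∈ Set.Ioo (0 : ℝ) 1 := Ioo_mem_nhdsGT one_pos
  filter_upwards [hIoo, hlim.eventually (gt_mem_nhds (show ε / 2 < ε by linarith))] with x hx hxε
  obtain ⟨hx0, hx1⟩ := hx
  have hw := w_hasSum m hx0 hx1
  have hq : 0 ≤ 1 - x := by linarith
  have hsf := abel_summable m f 0 h hx0 hx1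
  have hfin : HasSum (fun l : ℕ => if l ∈ Finset.range N then |f l| else 0) K := by
    have := hasSum_sum_of_ne_finset_zero (L := SummationFilter.unconditional ℕ) (f := fun l : ℕ => if l ∈ Finset.range N then |f l| else 0)
      (s := Finset.range N) (fun b hb => by simp only [if_neg hb])
    convert this using 1
    rw [hK]
    exact Finset.sum_congr rfl fun l hl => by rw [if_pos hl]
  have hdom := (hw.mul_left (ε / 2)).add hfin
  have hb : ∀ l : ℕ, ‖f l * (1 - x) ^ l‖ ≤
      ε / 2 * (((l + m).choose m : ℝ) * (1 - x) ^ l) +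
        (if l ∈ Finset.range N then |f l| else 0) := by
    intro l
    have hp : 0 ≤ (1 - x) ^ l := pow_nonneg hq l
    have hp1 : (1 - x) ^ l ≤ 1 := pow_le_one₀ hq (by linarith)
    rw [norm_mul, Real.norm_eq_abs, Real.norm_eq_abs, abs_of_nonneg hp]
    split_ifs with hl
    · have := mul_le_mul_of_nonneg_left hp1 (abs_nonneg (f l))
      have h2 : 0 ≤ ε / 2 * (((l + m).choose m : ℝ) * (1 - x) ^ l) := by
        have := w_pos m l
        positivity
      linarith
    · have := mul_le_mul_of_nonneg_right (hN l (by simpa using hl)) hp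
      linarith
  have hle := tsum_of_norm_bounded hdom hb
  rw [Real.dist_eq, sub_zero, abs_mul, abs_of_pos (pow_pos hx0 _)]
  rw [Real.norm_eq_abs] at hle
  have hxp : 0 < x ^ (m + 1) := pow_pos hx0 _
  calc x ^ (m + 1) * |∑' l : ℕ, f l * (1 - x) ^ l|
      ≤ x ^ (m + 1) * (ε / 2 * (1 / x ^ (m + 1)) + K) := by gcongr
    _ = ε / 2 + x ^ (m + 1) * K := by field_simp
    _ < ε := hxε

lemma abel_lim (m : ℕ) (f : ℕ → ℝ) (L : ℝ)
    (h : Tendsto (fun l : ℕ => f l / ((l + m).choose m : ℝ)) atTop (𝓝 L)) :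
    Tendsto (fun x : ℝ => x ^ (m + 1) * ∑' l : ℕ, f l * (1 - x) ^ l) (𝓝[>] 0) (𝓝 L) := by
  have h0 : Tendsto (fun l : ℕ => (f l - L * ((l + m).choose m : ℝ)) / ((l + m).choose m : ℝ))
      atTop (𝓝 0) := by
    have := h.sub_const L
    rw [sub_self] at this
    refine this.congr fun l => ?_
    have := (w_pos m l).ne'
    field_simp
  have h1 := (abel_zero m _ h0).add_const L
  rw [zero_add] at h1
  refine h1.congr' ?_
  have hIoo : ∀ᶠ x : ℝ in 𝓝[>] 0, x ∈ Set.Ioo (0 : ℝ) 1 := Ioo_mem_nhdsGT one_pos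
  filter_upwards [hIoo] with x hx
  have hw := (w_hasSum m hx.1 hx.2).mul_left L
  have hf := (abel_summable m f L h hx.1 hx.2).hasSum
  have h2 := (hf.sub hw).tsum_eq
  have h3 : (∑' l : ℕ, (f l - L * ((l + m).choose m : ℝ)) * (1 - x) ^ l) =
      (∑' l : ℕ, f l * (1 - x) ^ l) - L * (1 / x ^ (m + 1)) := by
    rw [← h2]
    exact tsum_congr fun l => by ring
  rw [h3]
  have : x ^ (m + 1) ≠ 0 := (pow_pos hx.1 _).ne'
  field_simp
  ring

lemma w_succ (m l : ℕ) : ((l + (m + 1)).choose (m + 1) : ℝ) =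
    ((l : ℝ) + m + 1) / (m + 1) * ((l + m).choose m : ℝ) := by
  have h := Nat.add_one_mul_choose_eq (l + m) m
  have h2 : ((l : ℝ) + m + 1) * ((l + m).choose m : ℝ) =
      ((l + (m + 1)).choose (m + 1) : ℝ) * (m + 1) := by exact_mod_cast h
  have : (m : ℝ) + 1 ≠ 0 := by positivity
  field_simp
  linarith

/-- powers of `l` times the weight -/
lemma shift_tsum (g : ℕ → ℝ) (h0 : g 0 = 0) (hg : Summable g) :
    ∑' l : ℕ, g (l + 1) = ∑' l : ℕ, g l := by
  rw [hg.tsum_eq_zero_add, h0, zero_add]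

lemma ratio_lim (a : ℝ) : Tendsto (fun l : ℕ => (l : ℝ) / ((l : ℝ) + a)) atTop (𝓝 1) := by
  have h := tendsto_natCast_div_add_atTop (𝕜 := ℝ) a
  exact h

lemma pow_lim (k j : ℕ) : ∃ c : ℝ, Tendsto
    (fun l : ℕ => ((l + k).choose k : ℝ) * (l : ℝ) ^ j / ((l + (k + j)).choose (k + j) : ℝ))
      atTop (𝓝 c) ∧ c = ∏ i ∈ Finset.range j, ((k : ℝ) + i + 1) := by
  induction j with
  | zero =>
    refine ⟨1, ?_, by simp⟩
    refine tendsto_const_nhds.congr fun l => ?_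
    have := (w_pos k l).ne'
    simp [this]
  | succ j ih =>
    obtain ⟨c, hc, hc'⟩ := ih
    refine ⟨_, (hc.mul ((ratio_lim ((k : ℝ) + j + 1)).mul_const ((k : ℝ) + j + 1))).congr
      fun l => ?_, by rw [Finset.prod_range_succ, hc']; ring⟩
    have e : k + (j + 1) = (k + j) + 1 := by ring
    rw [e, w_succ (k + j) l]
    have := (w_pos (k + j) l).ne'
    have h2 : (l : ℝ) + (k + j + 1) ≠ 0 := by positivity
    have h3 : (k : ℝ) + j + 1 ≠ 0 := by positivity
    have h4 : (l : ℝ) + (k + j) + 1 ≠ 0 := by positivity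
    push_cast
    field_simp
    ring

lemma pow_summable (k j : ℕ) {x : ℝ} (hx : 0 < x) (hx1 : x < 1) :
    Summable (fun l : ℕ => ((l + k).choose k : ℝ) * (l : ℝ) ^ j * (1 - x) ^ l) := by
  obtain ⟨c, hc, -⟩ := pow_lim k j
  exact abel_summable (k + j) _ c hc hx hx1

lemma exp_pow (ρ : ℝ) (l : ℕ) : Real.exp (-2 * ρ * ((l : ℝ) + 1)) =
    (1 - (1 - Real.exp (-2 * ρ))) ^ (l + 1) := by
  rw [sub_sub_cancel, ← Real.exp_nat_mul]
  congr 1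
  push_cast
  ring

lemma choose_w (k l : ℕ) : (l + 1 + (k + 2) - 2).choose (l + 1) = (l + 1 + k).choose k := by
  rw [show l + 1 + (k + 2) - 2 = l + 1 + k by omega]
  rw [← Nat.choose_symm_add]

lemma x_mem {ρ : ℝ} (hρ : 0 < ρ) : 0 < 1 - Real.exp (-2 * ρ) ∧ 1 - Real.exp (-2 * ρ) < 1 := by
  have h1 := Real.exp_pos (-2 * ρ)
  have h2 : Real.exp (-2 * ρ) < 1 := by rw [Real.exp_lt_one_iff]; linarith
  constructor <;> linarith

lemma S_eq_s16 (k j : ℕ) (hj : j ≠ 0) {ρ : ℝ} (hρ : 0 < ρ) :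
    S (k + 2) (j : ℤ) ρ =
      ∑' l : ℕ, ((l + k).choose k : ℝ) * (l : ℝ) ^ j * (1 - (1 - Real.exp (-2 * ρ))) ^ l := by
  obtain ⟨h0, h1⟩ := x_mem hρ
  rw [← shift_tsum _ (by simp [hj]) (pow_summable k j h0 h1)]
  unfold S
  refine tsum_congr fun l => ?_
  rw [exp_pow, choose_w, zpow_natCast]
  push_cast
  ring

lemma A_eq (k : ℕ) {ρ x : ℝ} (hρ : 0 < ρ) (hx : x = 1 - Real.exp (-2 * ρ)) :
    x ^ (k + 3) * A (k + 2) ρ = 2 * (k + 2) - (3 * k + 5) * x + (k + 1) * x ^ 2 := by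
  obtain ⟨h0, h1⟩ := x_mem hρ
  have s2 := S_eq_s16 k 2 (by norm_num) hρ
  have s1 := S_eq_s16 k 1 (by norm_num) hρ
  rw [← hx] at h0 h1 s1 s2
  have hk : (k : ℝ) + 1 ≠ 0 := by positivity
  have hk2 : (k : ℝ) + 2 ≠ 0 := by positivity
  have H := ((pow_summable k 2 h0 h1).hasSum.mul_left (2 / ((k : ℝ) + 1))).add
    (pow_summable k 1 h0 h1).hasSum
  have H2 := (((w_hasSum (k + 2) h0 h1).mul_left (2 * ((k : ℝ) + 2))).sub
    ((w_hasSum (k + 1) h0 h1).mul_left (3 * (k : ℝ) + 5))).add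
    ((w_hasSum k h0 h1).mul_left ((k : ℝ) + 1))
  have H3 : (fun l : ℕ => 2 / ((k : ℝ) + 1) *
      (((l + k).choose k : ℝ) * (l : ℝ) ^ 2 * (1 - x) ^ l) +
      ((l + k).choose k : ℝ) * (l : ℝ) ^ 1 * (1 - x) ^ l) = (fun l : ℕ =>
      2 * ((k : ℝ) + 2) * (((l + (k + 2)).choose (k + 2) : ℝ) * (1 - x) ^ l) -
          (3 * (k : ℝ) + 5) * (((l + (k + 1)).choose (k + 1) : ℝ) * (1 - x) ^ l) +
        ((k : ℝ) + 1) * (((l + k).choose k : ℝ) * (1 - x) ^ l)) := by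
    funext l
    rw [w_succ (k + 1) l, w_succ k l]
    push_cast
    field_simp
    ring
  rw [H3] at H
  have H4 := H.unique H2
  have e : A (k + 2) ρ = 2 / ((k : ℝ) + 1) * S (k + 2) 2 ρ + S (k + 2) 1 ρ := by
    unfold A
    push_cast
    rw [show (k : ℝ) + 2 - 1 = k + 1 by ring]
  push_cast at s1 s2
  rw [e, s1, s2, H4]
  field_simp
  ring

noncomputable def rr (k l : ℕ) : ℝ :=
  2 / ((k : ℝ) + 1) * (((l : ℝ) + k + 1) * (Real.sqrt ((l : ℝ) * (l + 1)) - l - 1 / 2)) *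
    ((l + k).choose k : ℝ)

lemma rr_lim (k : ℕ) : Tendsto (fun l : ℕ => rr k l / ((l + k).choose k : ℝ)) atTop
    (𝓝 (-1 / (4 * ((k : ℝ) + 1)))) := by
  have hinv : Tendsto (fun l : ℕ => ((l : ℝ))⁻¹) atTop (𝓝 0) :=
    tendsto_inv_atTop_zero.comp tendsto_natCast_atTop_atTop
  have hc : ContinuousAt (fun u : ℝ => 2 / ((k : ℝ) + 1) * ((1 + (k + 1) * u) *
      ((-1 / 4) / (Real.sqrt (1 + u) + 1 + u / 2)))) 0 := by
    apply ContinuousAt.mul continuousAt_const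
    apply ContinuousAt.mul (by fun_prop)
    apply ContinuousAt.div continuousAt_const (by fun_prop)
    norm_num
  have h := hc.tendsto.comp hinv
  have e : 2 / ((k : ℝ) + 1) * ((1 + (k + 1) * 0) *
      ((-1 / 4) / (Real.sqrt (1 + 0) + 1 + 0 / 2))) = -1 / (4 * ((k : ℝ) + 1)) := by
    have hk : (k : ℝ) + 1 ≠ 0 := by positivity
    norm_num
    field_simp
    norm_num
  rw [e] at h
  refine h.congr' ?_
  filter_upwards [eventually_gt_atTop 0] with l hl
  have hl' : (0 : ℝ) < l := by exact_mod_cast hl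
  have hw := (w_pos k l).ne'
  have hk : (k : ℝ) + 1 ≠ 0 := by positivity
  have hs : Real.sqrt ((l : ℝ) * (l + 1)) = l * Real.sqrt (1 + (l : ℝ)⁻¹) := by
    rw [show (l : ℝ) * (l + 1) = l ^ 2 * (1 + (l : ℝ)⁻¹) by field_simp,
      Real.sqrt_mul (by positivity), Real.sqrt_sq hl'.le]
  have hsq : Real.sqrt (1 + (l : ℝ)⁻¹) ^ 2 = 1 + (l : ℝ)⁻¹ := Real.sq_sqrt (by positivity)
  have hs0 := Real.sqrt_nonneg (1 + (l : ℝ)⁻¹)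
  simp only [Function.comp_apply, rr]
  rw [hs, mul_div_assoc, div_self hw, mul_one]
  set s := Real.sqrt (1 + (l : ℝ)⁻¹) with hsdef
  have hd : s + 1 + (l : ℝ)⁻¹ / 2 ≠ 0 := by positivity
  have key : (-1 / 4) / (s + 1 + (l : ℝ)⁻¹ / 2) = l * (l * s - l - 1 / 2) := by
    rw [div_eq_iff hd]
    have : (l : ℝ) * (l * s - l - 1 / 2) * (s + 1 + (l : ℝ)⁻¹ / 2) =
      l ^ 2 * (s ^ 2 - (1 + (l : ℝ)⁻¹ / 2) ^ 2) := by
      field_simp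
      ring
    rw [this, hsq]
    field_simp
    ring
  rw [key]
  field_simp
  ring

noncomputable def RR (k : ℕ) (x : ℝ) : ℝ := x ^ (k + 1) * ∑' l : ℕ, rr k l * (1 - x) ^ l

lemma RR_lim (k : ℕ) : Tendsto (RR k) (𝓝[>] 0) (𝓝 (-1 / (4 * ((k : ℝ) + 1)))) :=
  abel_lim k _ _ (rr_lim k)

lemma B_eq (k : ℕ) {ρ x : ℝ} (hρ : 0 < ρ) (hx : x = 1 - Real.exp (-2 * ρ)) :
    x ^ (k + 3) * B (k + 2) ρ = 2 * (k + 2) - (2 * k + 3) * x + RR k x * x ^ 2 := by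
  obtain ⟨h0, h1⟩ := x_mem hρ
  rw [← hx] at h0 h1
  have hk : (k : ℝ) + 1 ≠ 0 := by positivity
  have hk2 : (k : ℝ) + 2 ≠ 0 := by positivity
  have H2 := (((w_hasSum (k + 2) h0 h1).mul_left (2 * ((k : ℝ) + 2))).sub
    ((w_hasSum (k + 1) h0 h1).mul_left (2 * (k : ℝ) + 3))).add
    (abel_summable k _ _ (rr_lim k) h0 h1).hasSum
  have H3 : (fun l : ℕ =>
      2 * ((k : ℝ) + 2) * (((l + (k + 2)).choose (k + 2) : ℝ) * (1 - x) ^ l) -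
          (2 * (k : ℝ) + 3) * (((l + (k + 1)).choose (k + 1) : ℝ) * (1 - x) ^ l) +
        rr k l * (1 - x) ^ l) = fun l : ℕ => 2 * ((l : ℝ) + k + 1) / ((k : ℝ) + 1) *
      ((l + k).choose k : ℝ) * Real.sqrt ((l : ℝ) * (l + 1)) * (1 - x) ^ l := by
    funext l
    rw [w_succ (k + 1) l, w_succ k l, rr]
    push_cast
    field_simp
    ring
  rw [H3] at H2
  have e : B (k + 2) ρ = ∑' l : ℕ, 2 * ((l : ℝ) + k + 1) / ((k : ℝ) + 1) *
      ((l + k).choose k : ℝ) * Real.sqrt ((l : ℝ) * (l + 1)) * (1 - x) ^ l := by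
    rw [← shift_tsum _ (by simp) H2.summable]
    unfold B
    refine tsum_congr fun l => ?_
    rw [exp_pow, choose_w, ← hx]
    push_cast
    rw [show (l : ℝ) + 1 + 1 = l + 2 by ring, show (k : ℝ) + 2 - 1 = k + 1 by ring,
      show (l : ℝ) + 1 + (k + 2) - 1 = l + 1 + k + 1 by ring]
  rw [e, H2.tsum_eq, RR]
  field_simp
  ring

lemma C_lim (k : ℕ) : Tendsto (fun x : ℝ => x ^ (k + 5) *
    (2 / ((k : ℝ) + 1) * (∑' l : ℕ, ((l + k).choose k : ℝ) * (l : ℝ) ^ 4 * (1 - x) ^ l) +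
    3 * (∑' l : ℕ, ((l + k).choose k : ℝ) * (l : ℝ) ^ 3 * (1 - x) ^ l) +
    ((k : ℝ) + 1) * (∑' l : ℕ, ((l + k).choose k : ℝ) * (l : ℝ) ^ 2 * (1 - x) ^ l)))
    (𝓝[>] 0) (𝓝 (2 * ((k : ℝ) + 2) * (k + 3) * (k + 4))) := by
  obtain ⟨c4, h4, e4⟩ := pow_lim k 4
  obtain ⟨c3, h3, -⟩ := pow_lim k 3
  obtain ⟨c2, h2, -⟩ := pow_lim k 2
  have hk : (k : ℝ) + 1 ≠ 0 := by positivity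
  have hx : Tendsto (fun x : ℝ => x) (𝓝[>] 0) (𝓝 0) := tendsto_id.mono_left nhdsWithin_le_nhds
  have H := (((abel_lim _ _ _ h4).const_mul (2 / ((k : ℝ) + 1))).add
    ((hx.mul (abel_lim _ _ _ h3)).const_mul 3)).add
    (((hx.pow 2).mul (abel_lim _ _ _ h2)).const_mul ((k : ℝ) + 1))
  have e : 2 / ((k : ℝ) + 1) * c4 + 3 * (0 * c3) + ((k : ℝ) + 1) * (0 ^ 2 * c2) =
      2 * ((k : ℝ) + 2) * (k + 3) * (k + 4) := by
    rw [e4]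
    simp only [Finset.prod_range_succ, Finset.prod_range_zero]
    push_cast
    field_simp
    ring
  rw [e] at H
  refine H.congr fun x => ?_
  ring

lemma x_tendsto : Tendsto (fun ρ : ℝ => 1 - Real.exp (-2 * ρ)) (𝓝[>] 0) (𝓝[>] 0) := by
  refine tendsto_nhdsWithin_iff.2 ⟨?_, ?_⟩
  · have : Tendsto (fun ρ : ℝ => 1 - Real.exp (-2 * ρ)) (𝓝 0) (𝓝 (1 - Real.exp (-2 * 0))) := by
      apply Continuous.tendsto
      fun_prop
    simp only [mul_zero, Real.exp_zero, sub_self] at this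
    exact this.mono_left nhdsWithin_le_nhds
  · filter_upwards [self_mem_nhdsWithin] with ρ hρ
    exact (x_mem hρ).1

/-- The limit of the uncertainty product of the Abel-Poisson wavelet as `ρ → 0+`. -/
theorem stmt_16 (n : ℕ) (hn : 2 ≤ n) :
    Tendsto
      (fun ρ : ℝ =>
        Real.sqrt (Real.exp (2 * ρ) * (A n ρ) ^ 2 / (B n ρ) ^ 2 - 1) *
          Real.sqrt (Cf n ρ / A n ρ))
      (nhdsWithin 0 (Set.Ioi 0))
      (nhds ((1 / 2) * Real.sqrt (((n : ℝ) + 1) * ((n : ℝ) + 2) *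
        ((n : ℝ) ^ 2 - 3 * (n : ℝ) + 3) / ((n : ℝ) * ((n : ℝ) - 1))))) := by
  obtain ⟨k, rfl⟩ : ∃ k, n = k + 2 := ⟨n - 2, by omega⟩
  clear hn
  have hk : (k : ℝ) + 1 ≠ 0 := by positivity
  have hk2 : (k : ℝ) + 2 ≠ 0 := by positivity
  have hx : Tendsto (fun x : ℝ => x) (𝓝[>] 0) (𝓝 0) := tendsto_id.mono_left nhdsWithin_le_nhds
  set a : ℝ := 3 * k + 5 with ha
  set b : ℝ := 2 * k + 3 with hb
  set c : ℝ := 2 * (k + 2) with hc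
  set d : ℝ := k + 1 with hd
  -- denominators
  have hB : Tendsto (fun x : ℝ => c - b * x + RR k x * x ^ 2) (𝓝[>] 0) (𝓝 c) := by
    have := ((hx.const_mul b).const_sub c).add ((RR_lim k).mul (hx.pow 2))
    simpa using this
  have hA : Tendsto (fun x : ℝ => c - a * x + d * x ^ 2) (𝓝[>] 0) (𝓝 c) := by
    have := ((hx.const_mul a).const_sub c).add ((hx.pow 2).const_mul d)
    simpa using this
  have hcpos : 0 < c := by rw [hc]; positivity
  -- the first factor
  have hN : Tendsto (fun x : ℝ => (a ^ 2 + 2 * c * d - 2 * a * d * x + d ^ 2 * x ^ 2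
      - (b ^ 2 + 2 * c * RR k x - 2 * b * RR k x * x + RR k x ^ 2 * x ^ 2)
      + (-2 * c * b + b ^ 2 * x + 2 * c * RR k x * x - 2 * b * RR k x * x ^ 2
        + RR k x ^ 2 * x ^ 3)) / ((1 - x) * (c - b * x + RR k x * x ^ 2) ^ 2)) (𝓝[>] 0)
      (𝓝 ((a ^ 2 + 2 * c * d - (b ^ 2 + 2 * c * (-1 / (4 * ((k : ℝ) + 1)))) - 2 * c * b)
        / c ^ 2)) := by
    have hR := RR_lim k
    set r0 : ℝ := -1 / (4 * ((k : ℝ) + 1)) with hr0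
    have hden : Tendsto (fun x : ℝ => (1 - x) * (c - b * x + RR k x * x ^ 2) ^ 2) (𝓝[>] 0)
        (𝓝 (c ^ 2)) := by
      have := (hx.const_sub 1).mul (hB.pow 2)
      simpa using this
    refine Tendsto.div ?_ hden (by positivity)
    have hp : Tendsto (fun x : ℝ => (RR k x, x)) (𝓝[>] 0) (𝓝 (r0, 0)) := hR.prodMk_nhds hx
    have hcont : Continuous (fun p : ℝ × ℝ => a ^ 2 + 2 * c * d - 2 * a * d * p.2 + d ^ 2 * p.2 ^ 2
      - (b ^ 2 + 2 * c * p.1 - 2 * b * p.1 * p.2 + p.1 ^ 2 * p.2 ^ 2)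
      + (-2 * c * b + b ^ 2 * p.2 + 2 * c * p.1 * p.2 - 2 * b * p.1 * p.2 ^ 2
        + p.1 ^ 2 * p.2 ^ 3)) := by fun_prop
    have := (hcont.tendsto (r0, 0)).comp hp
    have e0 : a ^ 2 + 2 * c * d - (b ^ 2 + 2 * c * r0) - 2 * c * b =
        a ^ 2 + 2 * c * d - 2 * a * d * (0 : ℝ) + d ^ 2 * (0 : ℝ) ^ 2
      - (b ^ 2 + 2 * c * r0 - 2 * b * r0 * (0 : ℝ) + r0 ^ 2 * (0 : ℝ) ^ 2)
      + (-2 * c * b + b ^ 2 * (0 : ℝ) + 2 * c * r0 * (0 : ℝ) - 2 * b * r0 * (0 : ℝ) ^ 2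
        + r0 ^ 2 * (0 : ℝ) ^ 3) := by ring
    rw [e0]
    exact this
  have hN' := (Real.continuous_sqrt.tendsto _).comp (hN.comp x_tendsto)
  have hC' := (Real.continuous_sqrt.tendsto _).comp
    (((C_lim k).div hA hcpos.ne').comp x_tendsto)
  have hfin := hN'.mul hC'
  have hval : Real.sqrt ((a ^ 2 + 2 * c * d - (b ^ 2 + 2 * c * (-1 / (4 * ((k : ℝ) + 1))))
      - 2 * c * b) / c ^ 2) * Real.sqrt (2 * ((k : ℝ) + 2) * (k + 3) * (k + 4) / c) =
      (1 / 2) * Real.sqrt ((((k + 2 : ℕ) : ℝ) + 1) * (((k + 2 : ℕ) : ℝ) + 2) *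
        (((k + 2 : ℕ) : ℝ) ^ 2 - 3 * ((k + 2 : ℕ) : ℝ) + 3) /
          (((k + 2 : ℕ) : ℝ) * (((k + 2 : ℕ) : ℝ) - 1))) := by
    have h12 : (1 / 2 : ℝ) = Real.sqrt (1 / 4) := by
      rw [show (1 / 4 : ℝ) = (1 / 2) ^ 2 by norm_num, Real.sqrt_sq (by norm_num)]
    rw [h12, ← Real.sqrt_mul' _ (by positivity), ← Real.sqrt_mul (by norm_num)]
    congr 1
    rw [ha, hb, hc, hd]
    push_cast
    rw [show (k : ℝ) + 2 - 1 = k + 1 by ring]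
    field_simp
    ring
  rw [hval] at hfin
  refine hfin.congr' ?_
  have hBpos : ∀ᶠ ρ : ℝ in 𝓝[>] 0, 0 < c - b * (1 - Real.exp (-2 * ρ)) +
      RR k (1 - Real.exp (-2 * ρ)) * (1 - Real.exp (-2 * ρ)) ^ 2 :=
    (hB.comp x_tendsto).eventually (lt_mem_nhds hcpos)
  have hApos : ∀ᶠ ρ : ℝ in 𝓝[>] 0, 0 < c - a * (1 - Real.exp (-2 * ρ)) +
      d * (1 - Real.exp (-2 * ρ)) ^ 2 :=
    (hA.comp x_tendsto).eventually (lt_mem_nhds hcpos)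
  filter_upwards [self_mem_nhdsWithin, hBpos, hApos] with ρ hρ hBp hAp
  obtain ⟨h0, h1⟩ := x_mem hρ
  have s4 := S_eq_s16 k 4 (by norm_num) hρ
  have s3 := S_eq_s16 k 3 (by norm_num) hρ
  have s2 := S_eq_s16 k 2 (by norm_num) hρ
  push_cast at s2 s3 s4
  have eC : Cf (k + 2) ρ = 2 / ((k : ℝ) + 1) * S (k + 2) 4 ρ + 3 * S (k + 2) 3 ρ +
      ((k : ℝ) + 1) * S (k + 2) 2 ρ := by
    unfold Cf
    push_cast
    rw [show (k : ℝ) + 2 - 1 = k + 1 by ring]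
  have eexp : Real.exp (2 * ρ) = 1 / (1 - (1 - Real.exp (-2 * ρ))) := by
    rw [sub_sub_cancel, one_div, ← Real.exp_neg]
    congr 1
    ring
  have eA := A_eq k hρ rfl
  have eB := B_eq k hρ rfl
  simp only [Function.comp_apply, Pi.div_apply]
  rw [← s4, ← s3, ← s2, ← eC, eexp]
  rw [← ha, ← hc, ← hd] at eA
  rw [← hb, ← hc] at eB
  generalize 1 - Real.exp (-2 * ρ) = x at *
  rw [← eA] at hAp
  have hxk : 0 < x ^ (k + 3) := pow_pos h0 _
  have hA0 : 0 < A (k + 2) ρ := pos_of_mul_pos_right hAp hxk.le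
  have hB0 : 0 < B (k + 2) ρ := by
    rw [← eB] at hBp
    exact pos_of_mul_pos_right hBp hxk.le
  have hq : 0 < 1 - x := by linarith
  have p1 : 1 / (1 - x) * A (k + 2) ρ ^ 2 / B (k + 2) ρ ^ 2 - 1 = x ^ 2 *
      ((a ^ 2 + 2 * c * d - 2 * a * d * x + d ^ 2 * x ^ 2
      - (b ^ 2 + 2 * c * RR k x - 2 * b * RR k x * x + RR k x ^ 2 * x ^ 2)
      + (-2 * c * b + b ^ 2 * x + 2 * c * RR k x * x - 2 * b * RR k x * x ^ 2
        + RR k x ^ 2 * x ^ 3)) / ((1 - x) * (c - b * x + RR k x * x ^ 2) ^ 2)) := by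
    have q1 : 1 / (1 - x) * A (k + 2) ρ ^ 2 / B (k + 2) ρ ^ 2 - 1 =
        ((x ^ (k + 3) * A (k + 2) ρ) ^ 2 - (1 - x) * (x ^ (k + 3) * B (k + 2) ρ) ^ 2) /
          ((1 - x) * (x ^ (k + 3) * B (k + 2) ρ) ^ 2) := by
      field_simp
    rw [q1, eA, eB, ← mul_div_assoc]
    congr 1
    rw [ha, hb, hc, hd]
    ring
  have p2 : Cf (k + 2) ρ / A (k + 2) ρ =
      (x ^ (k + 5) * Cf (k + 2) ρ / (c - a * x + d * x ^ 2)) / x ^ 2 := by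
    rw [← eA]
    field_simp
    ring
  rw [p1, p2, Real.sqrt_mul (by positivity), Real.sqrt_sq h0.le,
    Real.sqrt_div' (x ^ (k + 5) * Cf (k + 2) ρ / (c - a * x + d * x ^ 2))
      (show 0 ≤ x ^ 2 by positivity), Real.sqrt_sq h0.le]
  generalize Real.sqrt _ = u
  generalize Real.sqrt _ = v
  field_simp
end
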